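/- Let f : ℤⁿ → ℝ ∪ {+∞} and α be a positive integer, and define the scaled function f^α : ℤⁿ → ℝ ∪ {+∞} by f^α(x) = f(αx). If f is globally discrete midpoint convex, then f^α is globally discrete midpoint convex; if f is locally discrete midpoint convex, then f^α is locally discrete midpoint convex. -/

import Mathlib

/-- The ℓ∞-norm of an integer vector, as a natural number. -/
def linf {n : ℕ} (z : Fin n → ℤ) : ℕ :=
  Finset.univ.sup fun i => (z i).natAbs

/-- Componentwise round-up of (x+y)/2. -/
def avgUp {n : ℕ} (x y : Fin n → ℤ) : Fin n → ℤ :=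
  fun i => ⌈((x i + y i : ℚ)) / 2⌉

/-- Componentwise round-down of (x+y)/2. -/
def avgDown {n : ℕ} (x y : Fin n → ℤ) : Fin n → ℤ :=
  fun i => ⌊((x i + y i : ℚ)) / 2⌋

/-- A set `S ⊆ ℤⁿ` is discrete midpoint convex. -/
def DMCSet {n : ℕ} (S : Set (Fin n → ℤ)) : Prop :=
  ∀ ⦃x⦄, x ∈ S → ∀ ⦃y⦄, y ∈ S → 2 ≤ linf (x - y) →
    avgUp x y ∈ S ∧ avgDown x y ∈ S

/-- `f` satisfies discrete midpoint convexity for the pair `(x, y)`.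
Values are in `ℝ ∪ {+∞}`, modeled as `WithTop ℝ`. -/
def DMCPair {n : ℕ} (f : (Fin n → ℤ) → WithTop ℝ) (x y : Fin n → ℤ) : Prop :=
  f (avgUp x y) + f (avgDown x y) ≤ f x + f y

/-- `f` is globally discrete midpoint convex. -/
def GloballyDMC {n : ℕ} (f : (Fin n → ℤ) → WithTop ℝ) : Prop :=
  ∀ x y : Fin n → ℤ, 2 ≤ linf (x - y) → DMCPair f x y

/-- The effective domain of `f`. -/
def effDom {n : ℕ} (f : (Fin n → ℤ) → WithTop ℝ) : Set (Fin n → ℤ) :=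
  {x | f x ≠ ⊤}

/-- `f` is locally discrete midpoint convex. -/
def LocallyDMC {n : ℕ} (f : (Fin n → ℤ) → WithTop ℝ) : Prop :=
  DMCSet (effDom f) ∧ ∀ x y : Fin n → ℤ, linf (x - y) = 2 → DMCPair f x y

theorem avgUp_apply {n : ℕ} (x y : Fin n → ℤ) (i : Fin n) :
    avgUp x y i = (x i + y i + 1) / 2 := by
  unfold avgUp
  rw [Int.ceil_eq_iff]
  have h : x i + y i = 2 * ((x i + y i + 1) / 2) - 1 ∨
      x i + y i = 2 * ((x i + y i + 1) / 2) := by omega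
  have h' : (x i + y i : ℚ) = 2 * (((x i + y i + 1) / 2 : ℤ) : ℚ) - 1 ∨
      (x i + y i : ℚ) = 2 * (((x i + y i + 1) / 2 : ℤ) : ℚ) := by exact_mod_cast h
  rcases h' with h' | h' <;> constructor <;> linarith

theorem avgDown_apply {n : ℕ} (x y : Fin n → ℤ) (i : Fin n) :
    avgDown x y i = (x i + y i) / 2 := by
  unfold avgDown
  rw [Int.floor_eq_iff]
  have h : x i + y i = 2 * ((x i + y i) / 2) + 1 ∨
      x i + y i = 2 * ((x i + y i) / 2) := by omega
  have h' : (x i + y i : ℚ) = 2 * (((x i + y i) / 2 : ℤ) : ℚ) + 1 ∨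
      (x i + y i : ℚ) = 2 * (((x i + y i) / 2 : ℤ) : ℚ) := by exact_mod_cast h
  rcases h' with h' | h' <;> constructor <;> linarith

theorem avgUp_add_avgDown {n : ℕ} (x y : Fin n → ℤ) : avgUp x y + avgDown x y = x + y := by
  ext i
  simp only [Pi.add_apply, avgUp_apply, avgDown_apply]
  omega

theorem avgUp_of_sub_eq {n : ℕ} {x y p q : Fin n → ℤ} (h : q - p = y - x) :
    avgUp p q = p + (avgUp x y - x) := by
  ext i
  have := congrFun h i
  simp only [Pi.add_apply, Pi.sub_apply, avgUp_apply] at *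
  omega

theorem avgDown_of_sub_eq {n : ℕ} {x y p q : Fin n → ℤ} (h : q - p = y - x) :
    avgDown p q = p + (avgDown x y - x) := by
  ext i
  have := congrFun h i
  simp only [Pi.add_apply, Pi.sub_apply, avgDown_apply] at *
  omega

theorem natAbs_le_linf {n : ℕ} (z : Fin n → ℤ) (i : Fin n) : (z i).natAbs ≤ linf z :=
  Finset.le_sup (f := fun i => (z i).natAbs) (Finset.mem_univ i)

theorem exists_natAbs_eq_linf {n : ℕ} {z : Fin n → ℤ} (hz : 0 < linf z) :
    ∃ i, (z i).natAbs = linf z := by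
  have : Nonempty (Fin n) := by
    by_contra h
    rw [not_nonempty_iff] at h
    simp [linf] at hz
  obtain ⟨i, -, hi⟩ := Finset.exists_mem_eq_sup Finset.univ Finset.univ_nonempty
    fun i => (z i).natAbs
  exact ⟨i, hi.symm⟩

theorem linf_sub_comm {n : ℕ} (x y : Fin n → ℤ) : linf (x - y) = linf (y - x) := by
  unfold linf
  congr 1
  ext i
  simp only [Pi.sub_apply]
  omega

/-- The squared Euclidean norm of an integer vector. -/
def normSqNat {n : ℕ} (x : Fin n → ℤ) : ℕ := ∑ i, (x i).natAbs ^ 2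

theorem normSqNat_avg_lt {n : ℕ} {x y : Fin n → ℤ} (h : 2 ≤ linf (x - y)) :
    normSqNat (avgUp x y) + normSqNat (avgDown x y) < normSqNat x + normSqNat y := by
  obtain ⟨k, hk⟩ := exists_natAbs_eq_linf (show 0 < linf (x - y) by omega)
  simp only [normSqNat, ← Finset.sum_add_distrib]
  have key (i : Fin n) : ∃ d : ℤ, x i - y i = d ∧
      ((avgUp x y i) ^ 2 + (avgDown x y i) ^ 2 = x i ^ 2 + y i ^ 2 - 2 * (d / 2) * (d - d / 2)) := by
    refine ⟨_, rfl, ?_⟩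
    rw [avgUp_apply, avgDown_apply]
    obtain ⟨e, he | he⟩ : ∃ e, x i - y i = 2 * e ∨ x i - y i = 2 * e + 1 :=
      ⟨(x i - y i) / 2, by omega⟩
    · rw [show (x i + y i + 1) / 2 = y i + e by omega, show (x i + y i) / 2 = y i + e by omega,
        show (x i - y i) / 2 = e by omega, show x i = y i + 2 * e by omega]
      ring
    · rw [show (x i + y i + 1) / 2 = y i + e + 1 by omega,
        show (x i + y i) / 2 = y i + e by omega,
        show (x i - y i) / 2 = e by omega, show x i = y i + 2 * e + 1 by omega]
      ring
  refine Finset.sum_lt_sum (fun i _ => ?_) ⟨k, Finset.mem_univ k, ?_⟩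
  · obtain ⟨d, hd, hi⟩ := key i
    zify
    simp only [sq_abs]
    have : 0 ≤ (d / 2) * (d - d / 2) := by
      rcases le_or_gt 0 d with h0 | h0
      · exact mul_nonneg (by omega) (by omega)
      · exact mul_nonneg_of_nonpos_of_nonpos (by omega) (by omega)
    nlinarith
  · obtain ⟨d, hd, hi⟩ := key k
    rw [Pi.sub_apply, hd] at hk
    zify
    simp only [sq_abs]
    have : 0 < (d / 2) * (d - d / 2) := by
      rcases le_or_gt 0 d with h0 | h0
      · exact mul_pos (by omega) (by omega)
      · exact mul_pos_of_neg_of_neg (by omega) (by omega)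
    nlinarith

theorem Multiset.sum_apply_le_card_mul {n : ℕ} (M : Multiset (Fin n → ℤ)) (i : Fin n) (c : ℤ)
    (h : ∀ b ∈ M, b i ≤ c) : M.sum i ≤ M.card * c := by
  induction M using Multiset.induction with
  | empty => simp
  | cons a M ih =>
    have h1 := h a (Multiset.mem_cons_self a M)
    have h2 := ih fun b hb => h b (Multiset.mem_cons_of_mem hb)
    simp only [Multiset.sum_cons, Pi.add_apply, Multiset.card_cons, Nat.cast_add, Nat.cast_one]
    linarith

theorem Multiset.card_mul_le_sum_apply {n : ℕ} (M : Multiset (Fin n → ℤ)) (i : Fin n) (c : ℤ)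
    (h : ∀ b ∈ M, c ≤ b i) : M.card * c ≤ M.sum i := by
  induction M using Multiset.induction with
  | empty => simp
  | cons a M ih =>
    have h1 := h a (Multiset.mem_cons_self a M)
    have h2 := ih fun b hb => h b (Multiset.mem_cons_of_mem hb)
    simp only [Multiset.sum_cons, Pi.add_apply, Multiset.card_cons, Nat.cast_add, Nat.cast_one]
    linarith

/-- If an integer point `z` is the average of `a` and points within `ℓ∞`-distance one of `a`,
then `a = z`. -/
theorem eq_of_sum_eq_card_nsmul {n : ℕ} {a z : Fin n → ℤ} {M : Multiset (Fin n → ℤ)}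
    (hM : ∀ b ∈ M, linf (a - b) ≤ 1) (hsum : (a ::ₘ M).sum = (a ::ₘ M).card • z) : a = z := by
  ext i
  have hs := congrFun hsum i
  simp only [Multiset.sum_cons, Pi.add_apply, Multiset.card_cons, Pi.smul_apply, nsmul_eq_mul,
    Nat.cast_add, Nat.cast_one] at hs
  have hb : ∀ b ∈ M, a i - 1 ≤ b i ∧ b i ≤ a i + 1 := fun b hb => by
    have h1 := natAbs_le_linf (a - b) i
    have h2 := hM b hb
    rw [Pi.sub_apply] at h1
    omega
  rcases lt_trichotomy (a i) (z i) with h | h | h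
  · have := M.sum_apply_le_card_mul i (z i) fun b hb' => by have := hb b hb'; omega
    linarith
  · exact h
  · have := M.card_mul_le_sum_apply i (z i) fun b hb' => by have := hb b hb'; omega
    linarith

/-- A discrete midpoint convex set contains every integer point that is an average of its points. -/
theorem DMCSet.mem_of_sum_eq_card_nsmul {n : ℕ} {S : Set (Fin n → ℤ)} (hS : DMCSet S)
    {z : Fin n → ℤ} (M : Multiset (Fin n → ℤ)) (hM : ∀ x ∈ M, x ∈ S) (hpos : M ≠ 0)
    (hsum : M.sum = M.card • z) : z ∈ S := by
  induction hN : (M.map normSqNat).sum using Nat.strong_induction_on generalizing M with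
  | _ N ih =>
  subst hN
  obtain ⟨a, ha⟩ := Multiset.exists_mem_of_ne_zero hpos
  obtain ⟨M, rfl⟩ := Multiset.exists_cons_of_mem ha
  by_cases hfar : ∃ b ∈ M, 2 ≤ linf (a - b)
  · obtain ⟨b, hb, hab⟩ := hfar
    obtain ⟨M, rfl⟩ := Multiset.exists_cons_of_mem hb
    obtain ⟨hu, hd⟩ := hS (hM a (by simp)) (hM b (by simp)) hab
    refine ih _ ?_ (avgUp a b ::ₘ avgDown a b ::ₘ M) ?_ (by simp) ?_ rfl
    · have := normSqNat_avg_lt hab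
      simp only [Multiset.map_cons, Multiset.sum_cons]
      omega
    · intro x hx
      simp only [Multiset.mem_cons] at hx
      rcases hx with rfl | rfl | hx
      · exact hu
      · exact hd
      · exact hM x (by simp [hx])
    · simp only [Multiset.sum_cons, Multiset.card_cons] at hsum ⊢
      rw [← hsum, ← add_assoc, avgUp_add_avgDown, add_assoc]
  · push Not at hfar
    rw [← eq_of_sum_eq_card_nsmul (fun b hb => Nat.le_of_lt_succ (hfar b hb)) hsum]
    exact hM a ha

theorem DMCSet.add_nsmul_mem {n : ℕ} {S : Set (Fin n → ℤ)} (hS : DMCSet S) {p t : Fin n → ℤ}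
    {m k : ℕ} (hp : p ∈ S) (hq : p + m • t ∈ S) (hm : 0 < m) (hk : k ≤ m) : p + k • t ∈ S := by
  refine hS.mem_of_sum_eq_card_nsmul
    (Multiset.replicate k (p + m • t) + Multiset.replicate (m - k) p) ?_ ?_ ?_
  · intro x hx
    rcases Multiset.mem_add.1 hx with hx | hx <;> rw [Multiset.eq_of_mem_replicate hx] <;>
      assumption
  · rw [← Multiset.card_pos]
    simp only [Multiset.card_add, Multiset.card_replicate]
    omega
  · obtain ⟨l, rfl⟩ := Nat.exists_eq_add_of_le hk
    simp only [Multiset.sum_add, Multiset.sum_replicate, Multiset.card_add,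
      Multiset.card_replicate, Nat.add_sub_cancel_left]
    module

/-- If `p` and `p + m(y - x)` lie in a discrete midpoint convex set, then so does the whole grid
spanned by the two rounded halves of `y - x`. -/
theorem DMCSet.grid_mem {n : ℕ} {S : Set (Fin n → ℤ)} (hS : DMCSet S) {p x y : Fin n → ℤ}
    {m : ℕ} (hxy : 2 ≤ linf (x - y)) (hp : p ∈ S) (hq : p + m • (y - x) ∈ S) (hm : 0 < m)
    {i j : ℕ} (hi : i ≤ m) (hj : j ≤ m) :
    p + i • (avgUp x y - x) + j • (avgDown x y - x) ∈ S := by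
  have huv : avgUp x y - x + (avgDown x y - x) = y - x := by
    rw [sub_add_sub_comm, avgUp_add_avgDown]
    abel
  have hcell : ∀ w ∈ S, w + (y - x) ∈ S →
      w + (avgUp x y - x) ∈ S ∧ w + (avgDown x y - x) ∈ S := by
    intro w hw hw'
    have hsub : w + (y - x) - w = y - x := add_sub_cancel_left _ _
    rw [← avgUp_of_sub_eq hsub, ← avgDown_of_sub_eq hsub]
    exact hS hw hw' (by rwa [linf_sub_comm, hsub, linf_sub_comm])
  revert hcell huv
  generalize avgUp x y - x = u
  generalize avgDown x y - x = v
  generalize y - x = t at *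
  rintro rfl hcell
  have hoff : ∀ d k : ℕ, k + d ≤ m → p + (k + d) • u + k • v ∈ S ∧ p + k • u + (k + d) • v ∈ S := by
    intro d
    induction d with
    | zero =>
      intro k hk
      have := hS.add_nsmul_mem hp hq hm (k := k) (by omega)
      rw [nsmul_add, ← add_assoc] at this
      exact ⟨this, this⟩
    | succ d ih =>
      intro k hk
      obtain ⟨h1, h2⟩ := ih k (by omega)
      rcases Nat.eq_zero_or_pos d with rfl | hd
      · obtain ⟨h3, -⟩ := ih (k + 1) (by omega)
        obtain ⟨h4, h5⟩ := hcell _ h1 (by convert h3 using 1; module)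
        exact ⟨by convert h4 using 1; module, by convert h5 using 1; module⟩
      · obtain ⟨h3, h4⟩ := ih (k + 1) (by omega)
        exact ⟨by convert (hcell _ h1 (by convert h3 using 1; module)).1 using 1; module,
          by convert (hcell _ h2 (by convert h4 using 1; module)).2 using 1; module⟩
  rcases le_total i j with h | h
  · obtain ⟨d, rfl⟩ := Nat.exists_eq_add_of_le h
    exact (hoff d i hj).2
  · obtain ⟨d, rfl⟩ := Nat.exists_eq_add_of_le h
    exact (hoff d j hi).1

/-- Summing the unit-cell inequalities over an `m × m` grid. -/
theorem corner_le_of_unit_cells {m : ℕ} (F : ℕ → ℕ → ℝ)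
    (h : ∀ i < m, ∀ j < m, F (i + 1) j + F i (j + 1) ≤ F i j + F (i + 1) (j + 1)) :
    F m 0 + F 0 m ≤ F 0 0 + F m m := by
  have hrow : ∀ j < m, ∀ a ≤ m, F a j + F 0 (j + 1) ≤ F 0 j + F a (j + 1) := by
    intro j hj a
    induction a with
    | zero => intro _; exact le_rfl
    | succ a ih =>
      intro ha
      linarith [ih (by omega), h a (by omega) j hj]
  have hcol : ∀ b ≤ m, F m 0 + F 0 b ≤ F 0 0 + F m b := by
    intro b
    induction b with
    | zero => intro _; exact (add_comm _ _).le
    | succ b ih =>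
      intro hb
      linarith [ih (by omega), hrow b (by omega) m le_rfl]
  exact hcol m le_rfl

theorem smul_eq_add_nsmul_sub {n : ℕ} (m : ℕ) (x z : Fin n → ℤ) :
    (m : ℤ) • z = (m : ℤ) • x + m • (z - x) := by
  module

theorem DMCSet.scaling {n : ℕ} {S : Set (Fin n → ℤ)} (hS : DMCSet S) {m : ℕ} (hm : 0 < m) :
    DMCSet {x | (m : ℤ) • x ∈ S} := by
  intro x hx y hy hxy
  simp only [Set.mem_ofPred_eq] at hx hy ⊢
  rw [smul_eq_add_nsmul_sub m x y] at hy
  rw [smul_eq_add_nsmul_sub m x (avgUp x y), smul_eq_add_nsmul_sub m x (avgDown x y)]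
  exact ⟨by simpa using hS.grid_mem hxy hx hy hm le_rfl (Nat.zero_le m),
    by simpa using hS.grid_mem hxy hx hy hm (Nat.zero_le m) le_rfl⟩

theorem DMCPair.scaling {n : ℕ} {f : (Fin n → ℤ) → WithTop ℝ} (hS : DMCSet (effDom f))
    {m : ℕ} (hm : 0 < m) {x y : Fin n → ℤ} (hxy : 2 ≤ linf (x - y))
    (hf : ∀ p q, q - p = y - x → DMCPair f p q) :
    DMCPair (fun x => f ((m : ℤ) • x)) x y := by
  simp only [DMCPair]
  by_cases hx : f ((m : ℤ) • x) = ⊤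
  · rw [hx, top_add]
    exact le_top
  by_cases hy : f ((m : ℤ) • y) = ⊤
  · rw [hy, add_top]
    exact le_top
  have huv : avgUp x y - x + (avgDown x y - x) = y - x := by
    rw [sub_add_sub_comm, avgUp_add_avgDown]
    abel
  rw [smul_eq_add_nsmul_sub m x y] at hy
  have hgrid := fun i j (hi : i ≤ m) (hj : j ≤ m) => hS.grid_mem hxy hx hy hm hi hj
  rw [smul_eq_add_nsmul_sub m x (avgUp x y), smul_eq_add_nsmul_sub m x (avgDown x y),
    smul_eq_add_nsmul_sub m x y]
  have hcell : ∀ w, f (w + (avgUp x y - x)) + f (w + (avgDown x y - x)) ≤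
      f w + f (w + (y - x)) := by
    intro w
    have hsub : w + (y - x) - w = y - x := add_sub_cancel_left _ _
    rw [← avgUp_of_sub_eq hsub, ← avgDown_of_sub_eq hsub]
    exact hf _ _ hsub
  revert hgrid huv hcell
  generalize avgUp x y - x = u
  generalize avgDown x y - x = v
  generalize y - x = t
  generalize (m : ℤ) • x = p
  rintro rfl hgrid hcell
  have hF : ∀ i j, i ≤ m → j ≤ m →
      f (p + i • u + j • v) = (((f (p + i • u + j • v)).untopD 0 : ℝ) : WithTop ℝ) :=
    fun i j hi hj => by
      obtain ⟨r, hr⟩ := WithTop.ne_top_iff_exists.1 (hgrid i j hi hj)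
      rw [← hr, WithTop.untopD_coe]
  have key := corner_le_of_unit_cells (m := m) (fun i j => (f (p + i • u + j • v)).untopD 0) <| by
    intro i hi j hj
    have h := hcell (p + i • u + j • v)
    rw [show p + i • u + j • v + u = p + (i + 1) • u + j • v by module,
      show p + i • u + j • v + v = p + i • u + (j + 1) • v by module,
      show p + i • u + j • v + (u + v) = p + (i + 1) • u + (j + 1) • v by module,
      hF _ _ hi.le hj.le, hF _ _ hi hj.le, hF _ _ hi.le hj, hF _ _ hi hj] at h
    exact_mod_cast h
  have h00 := hF 0 0 (Nat.zero_le m) (Nat.zero_le m)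
  have hm0 := hF m 0 le_rfl (Nat.zero_le m)
  have h0m := hF 0 m (Nat.zero_le m) le_rfl
  have hmm := hF m m le_rfl le_rfl
  simp only [zero_nsmul, add_zero] at h00 hm0 h0m key
  rw [nsmul_add, ← add_assoc, h00, hm0, h0m, hmm]
  exact_mod_cast key

theorem GloballyDMC.dmcSet_effDom {n : ℕ} {f : (Fin n → ℤ) → WithTop ℝ} (hf : GloballyDMC f) :
    DMCSet (effDom f) := by
  intro x hx y hy hxy
  have h := (hf x y hxy).trans_lt (WithTop.add_lt_top.2 ⟨lt_top_iff_ne_top.2 hx,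
    lt_top_iff_ne_top.2 hy⟩)
  exact ⟨(WithTop.add_lt_top.1 h).1.ne, (WithTop.add_lt_top.1 h).2.ne⟩

/-- Scaling preserves both global and local discrete midpoint convexity:
with `f^α(x) = f(αx)`, if `f` is globally (resp. locally) discrete midpoint
convex then so is `f^α`. -/
theorem dmcFn_scaling {n : ℕ} (f : (Fin n → ℤ) → WithTop ℝ)
    (α : ℕ) (hα : 0 < α) :
    (GloballyDMC f → GloballyDMC (fun x => f ((α : ℤ) • x))) ∧
    (LocallyDMC f → LocallyDMC (fun x => f ((α : ℤ) • x))) := by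
  refine ⟨fun hf x y hxy => ?_, fun hf => ⟨hf.1.scaling hα, fun x y hxy => ?_⟩⟩
  · refine DMCPair.scaling hf.dmcSet_effDom hα hxy fun p q hpq => hf p q ?_
    rwa [linf_sub_comm, hpq, linf_sub_comm]
  · refine DMCPair.scaling hf.1 hα hxy.ge fun p q hpq => hf.2 p q ?_
    rwa [linf_sub_comm, hpq, linf_sub_comm]
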